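/- Let L = N(A₉²D₆), let T = ℤa₁ × {0} × i₁(A₅) be the embedded copy of A₁ ⊕ A₅ (with A₁ = a₁ in the first A₉-factor and A₅ = i₁(A₅) in the D₆-factor), let W be the orthogonal complement of T in L and N the orthogonal complement of T in A₉⊕A₉⊕D₆. Then W/N is a cyclic group of order 10, and the submodule of W generated by the norm-2 vectors of W equals (ℤ-span of {a₃,…,a₉}) × A₉ × {0}, a lattice isometric to A₇ ⊕ A₉ which is saturated in W (so the associated elliptic fibration has trivial torsion and Mordell–Weil rank 2). -/

import Mathlib

noncomputable section

abbrev V6 : Type := Fin 6 → ℚ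

/-- The standard bilinear form on `ℚ⁶`. -/
def bil6 (x y : V6) : ℚ := ∑ i, x i * y i

def d1 : V6 := ![1, -1, 0, 0, 0, 0]
def d2 : V6 := ![0, 1, -1, 0, 0, 0]
def d3 : V6 := ![0, 0, 1, -1, 0, 0]
def d4 : V6 := ![0, 0, 0, 1, -1, 0]
def d5 : V6 := ![0, 0, 0, 0, 1, -1]
def d6 : V6 := ![0, 0, 0, 0, 1, 1]

/-- The `D₆` root lattice: integer vectors with even coordinate sum. -/
def D6 : Submodule ℤ V6 where
  carrier := {x | (∀ i, ∃ m : ℤ, x i = (m : ℚ)) ∧ ∃ k : ℤ, (∑ i, x i) = 2 * (k : ℚ)}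
  add_mem' := by
    rintro x y ⟨hx1, kx, hx2⟩ ⟨hy1, ky, hy2⟩
    refine ⟨fun i => ?_, kx + ky, ?_⟩
    · obtain ⟨m, hm⟩ := hx1 i
      obtain ⟨m', hm'⟩ := hy1 i
      exact ⟨m + m', by push_cast [Pi.add_apply, hm, hm']; ring⟩
    · have : (∑ i, (x + y) i) = (∑ i, x i) + ∑ i, y i := by
        simp [Pi.add_apply, Finset.sum_add_distrib]
      rw [this, hx2, hy2]; push_cast; ring
  zero_mem' := ⟨fun i => ⟨0, by simp⟩, 0, by simp⟩
  smul_mem' := by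
    rintro c x ⟨hx1, k, hx2⟩
    refine ⟨fun i => ?_, c * k, ?_⟩
    · obtain ⟨m, hm⟩ := hx1 i
      refine ⟨c * m, ?_⟩
      have : (c • x) i = (c : ℚ) * x i := by simp [Pi.smul_apply, zsmul_eq_mul]
      rw [this, hm]; push_cast; ring
    · have : (∑ i, (c • x) i) = (c : ℚ) * ∑ i, x i := by
        simp [Pi.smul_apply, zsmul_eq_mul, Finset.mul_sum]
      rw [this, hx2]; push_cast; ring

/-- The first embedding `i₁(A₅) ⊂ D₆`, spanned by `d₁,…,d₅`. -/
def i1A5 : Submodule ℤ V6 := Submodule.span ℤ {d1, d2, d3, d4, d5}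

/-- The second embedding `i₂(A₅) ⊂ D₆`, spanned by `d₁,…,d₄,d₆`. -/
def i2A5 : Submodule ℤ V6 := Submodule.span ℤ {d1, d2, d3, d4, d6}

/-- The Weyl group `W(D₆)`: the subgroup of linear automorphisms of `ℚ⁶` generated by
the reflections in the roots (norm-`2` vectors) of `D₆`. -/
def WeylD6 : Subgroup (V6 ≃ₗ[ℚ] V6) :=
  Subgroup.closure {s | ∃ r ∈ (D6 : Set V6), bil6 r r = 2 ∧ ∀ x, s x = x - bil6 x r • r}


/-- The nontrivial Dynkin diagram automorphism `g` of `D₆`: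
`g(e₆) = -e₆` and `g(eᵢ) = eᵢ` for `i ≤ 5` (it interchanges `d₅` and `d₆`). -/
def gmap (x : V6) : V6 := fun i => if i = 5 then -x 5 else x i

/-- The glue vector `δ₆ = ½(d₁+2d₂+3d₃+4d₄+2d₅+3d₆)`, representing the class `[1]`. -/
def delta6 : V6 :=
  (1/2 : ℚ) • (d1 + (2 : ℚ) • d2 + (3 : ℚ) • d3 + (4 : ℚ) • d4 + (2 : ℚ) • d5 + (3 : ℚ) • d6)

/-- The glue vector `δ̄₆ = d₁+d₂+d₃+d₄+½(d₅+d₆)`, representing the class `[2]`. -/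
def deltaBar6 : V6 := d1 + d2 + d3 + d4 + (1/2 : ℚ) • (d5 + d6)

/-- The glue vector `δ̃₆ = ½(d₁+2d₂+3d₃+4d₄+3d₅+2d₆)`, representing the class `[3]`. -/
def deltaTilde6 : V6 :=
  (1/2 : ℚ) • (d1 + (2 : ℚ) • d2 + (3 : ℚ) • d3 + (4 : ℚ) • d4 + (3 : ℚ) • d5 + (2 : ℚ) • d6)

abbrev V10 : Type := Fin 10 → ℚ

/-- The standard bilinear form on `ℚ¹⁰`. -/
def bil10 (x y : V10) : ℚ := ∑ i, x i * y i

/-- The simple roots `aᵢ = eᵢ - eᵢ₊₁` of `A₉` (here `a i` is `a_{i+1}` for `i : Fin 9`). -/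
def a (i : Fin 9) : V10 :=
  fun j => if (j : ℕ) = (i : ℕ) then 1 else if (j : ℕ) = (i : ℕ) + 1 then -1 else 0

/-- The `A₉` root lattice: integer vectors in `ℚ¹⁰` with coordinate sum zero. -/
def A9 : Submodule ℤ V10 where
  carrier := {x | (∀ i, ∃ m : ℤ, x i = (m : ℚ)) ∧ (∑ i, x i) = 0}
  add_mem' := by
    rintro x y ⟨hx1, hx2⟩ ⟨hy1, hy2⟩
    refine ⟨fun i => ?_, ?_⟩
    · obtain ⟨m, hm⟩ := hx1 i
      obtain ⟨m', hm'⟩ := hy1 i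
      exact ⟨m + m', by push_cast [Pi.add_apply, hm, hm']; ring⟩
    · have : (∑ i, (x + y) i) = (∑ i, x i) + ∑ i, y i := by
        simp [Pi.add_apply, Finset.sum_add_distrib]
      rw [this, hx2, hy2]; ring
  zero_mem' := ⟨fun i => ⟨0, by simp⟩, by simp⟩
  smul_mem' := by
    rintro c x ⟨hx1, hx2⟩
    refine ⟨fun i => ?_, ?_⟩
    · obtain ⟨m, hm⟩ := hx1 i
      refine ⟨c * m, ?_⟩
      have : (c • x) i = (c : ℚ) * x i := by simp [Pi.smul_apply, zsmul_eq_mul]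
      rw [this, hm]; push_cast; ring
    · have : (∑ i, (c • x) i) = (c : ℚ) * ∑ i, x i := by
        simp [Pi.smul_apply, zsmul_eq_mul, Finset.mul_sum]
      rw [this, hx2]; ring

/-- The glue generator `α = (1/10)(9a₁+8a₂+7a₃+6a₄+5a₅+4a₆+3a₇+2a₈+a₉)` of `A₉*/A₉`. -/
def alphaA9 : V10 := (1/10 : ℚ) • ∑ i : Fin 9, ((9 : ℚ) - (i : ℕ)) • a i

/-- The nontrivial diagram automorphism `γ₀` of `A₉`: `eᵢ ↦ -e₁₁₋ᵢ` (so `aᵢ ↦ a₁₀₋ᵢ`). -/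
def gamma0 (x : V10) : V10 := fun j => -(x j.rev)

abbrev V26 : Type := V10 × V10 × V6

/-- The standard bilinear form on `ℚ²⁶ = ℚ¹⁰ ⊕ ℚ¹⁰ ⊕ ℚ⁶`. -/
def bil26 (x y : V26) : ℚ := bil10 x.1 y.1 + bil10 x.2.1 y.2.1 + bil6 x.2.2 y.2.2

/-- The Niemeier lattice `N(A₉²D₆)`: the `ℤ`-submodule of `ℚ²⁶` generated by `A₉ ⊕ A₉ ⊕ D₆`
together with the glue vectors `(2α,4α,0)`, `(5α,0,δ₆)` and `(0,5α,δ̃₆)`. -/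
def NL2 : Submodule ℤ V26 :=
  Submodule.span ℤ ({p : V26 | p.1 ∈ A9 ∧ p.2.1 ∈ A9 ∧ p.2.2 ∈ D6} ∪
    {((2 : ℚ) • alphaA9, (4 : ℚ) • alphaA9, 0),
     ((5 : ℚ) • alphaA9, 0, delta6),
     (0, (5 : ℚ) • alphaA9, deltaTilde6)})

abbrev V8 : Type := Fin 8 → ℚ

/-- The standard bilinear form on `ℚ⁸`. -/
def bil8 (x y : V8) : ℚ := ∑ i, x i * y i

/-- The `A₇` root lattice: integer vectors in `ℚ⁸` with coordinate sum zero. -/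
def A7 : Submodule ℤ V8 where
  carrier := {x | (∀ i, ∃ m : ℤ, x i = (m : ℚ)) ∧ (∑ i, x i) = 0}
  add_mem' := by
    rintro x y ⟨hx1, hx2⟩ ⟨hy1, hy2⟩
    refine ⟨fun i => ?_, ?_⟩
    · obtain ⟨m, hm⟩ := hx1 i
      obtain ⟨m', hm'⟩ := hy1 i
      exact ⟨m + m', by push_cast [Pi.add_apply, hm, hm']; ring⟩
    · have : (∑ i, (x + y) i) = (∑ i, x i) + ∑ i, y i := by
        simp [Pi.add_apply, Finset.sum_add_distrib]
      rw [this, hx2, hy2]; ring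
  zero_mem' := ⟨fun i => ⟨0, by simp⟩, by simp⟩
  smul_mem' := by
    rintro c x ⟨hx1, hx2⟩
    refine ⟨fun i => ?_, ?_⟩
    · obtain ⟨m, hm⟩ := hx1 i
      refine ⟨c * m, ?_⟩
      have : (c • x) i = (c : ℚ) * x i := by simp [Pi.smul_apply, zsmul_eq_mul]
      rw [this, hm]; push_cast; ring
    · have : (∑ i, (c • x) i) = (c : ℚ) * ∑ i, x i := by
        simp [Pi.smul_apply, zsmul_eq_mul, Finset.mul_sum]
      rw [this, hx2]; ring

/-- The orthogonal complement (in `ℚ²⁶`, as a `ℤ`-submodule) of a set `S`. -/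
def orth26 (S : Set V26) : Submodule ℤ V26 where
  carrier := {x | ∀ t ∈ S, bil26 x t = 0}
  add_mem' := by
    intro x y hx hy t ht
    have h : bil26 (x + y) t = bil26 x t + bil26 y t := by
      simp [bil26, bil10, bil6, Prod.fst_add, Prod.snd_add, Pi.add_apply, add_mul,
        Finset.sum_add_distrib]
      ring
    rw [h, hx t ht, hy t ht, add_zero]
  zero_mem' := by intro t ht; simp [bil26, bil10, bil6]
  smul_mem' := by
    intro c x hx t ht
    have h : bil26 (c • x) t = (c : ℚ) * bil26 x t := by
      simp only [bil26, bil10, bil6, Prod.smul_fst, Prod.smul_snd, Pi.smul_apply,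
        zsmul_eq_mul]
      rw [mul_add, mul_add, Finset.mul_sum, Finset.mul_sum, Finset.mul_sum]
      simp [mul_assoc]
    rw [h, hx t ht, mul_zero]

/-- The embedded copy `T = ℤa₁ × {0} × i₁(A₅)` of `A₁ ⊕ A₅` in `N(A₉²D₆)`. -/
def Tset2 : Set V26 := {p | (∃ c : ℤ, p.1 = c • a 0) ∧ p.2.1 = 0 ∧ p.2.2 ∈ i1A5}

/-- `W`, the orthogonal complement of `T` in the Niemeier lattice `N(A₉²D₆)`. -/
def W2 : Submodule ℤ V26 := NL2 ⊓ orth26 Tset2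

/-- `N`, the orthogonal complement of `T` in the root lattice `A₉ ⊕ A₉ ⊕ D₆`. -/
def N2 : Submodule ℤ V26 := (A9.prod (A9.prod D6)) ⊓ orth26 Tset2

/-- The root sublattice of `W`: generated by the norm-`2` vectors of `W`. -/
def R2 : Submodule ℤ V26 := Submodule.span ℤ {x : V26 | x ∈ W2 ∧ bil26 x x = 2}

/-!
A vector orthogonal to `T` has constant `ℚ⁶`-component, so its glue class is a multiple
`s (α, 2α, δ₆)` with `s` modulo `10`; this class embeds `W/N` into `ℤ/10`, and `s = 1` occurs.

The coset `s α + A₉` has minimal norm at least `s (10 - s) / 10`, because `m (m - 1) ≥ 0` for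
integers `m`, and a constant vector with half-integral entries has norm at least `3/2`. Hence in a
nonzero class the norm exceeds `2`: it is at least `9/10 + 3/2` for `s` odd and `8/5 + 12/5` for
`s` even. So every root of `W` lies in `N`. There the `ℚ⁶`-component is an integral constant
vector, whose norm is `0` or at least `6`, and a vector of `A₉` with `x₁ = x₂ ≠ 0` has norm at
least `4`. The roots of `W` are therefore those of `⟨a₃, …, a₉⟩ × A₉ × {0}`. Inside `W` this
lattice is cut out by the linear equations `x₁ = 0` and `z = 0`, since an integral coordinate
forces `s = 0`; hence it is saturated.
-/

theorem nonempty_addEquiv_zmod_of_generator {G : Type*} [AddCommGroup G] {g : G} {n : ℕ}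
    (hg : ∀ x, ∃ m : ℤ, m • g = x) (hn : ∀ m : ℤ, m • g = 0 ↔ (n : ℤ) ∣ m) :
    Nonempty (G ≃+ ZMod n) := by
  have hker : AddSubgroup.zmultiples (n : ℤ) = (zmultiplesHom G g).ker := by
    ext m
    rw [Int.mem_zmultiples_iff, AddMonoidHom.mem_ker, zmultiplesHom_apply, hn]
  exact ⟨(QuotientAddGroup.liftEquiv _ (φ := zmultiplesHom G g) hg hker).symm.trans
    (Int.quotientZMultiplesNatEquivZMod n)⟩

section RootLatticeA

variable {ι : Type*} [Fintype ι] {n : ℕ} {s t : ℤ}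

/-- The root lattice `Aₘ₋₁`, for `m` the number of elements of `ι`: the integral vectors of `ℚ^ι`
with coordinate sum zero. -/
def rootLatticeA (ι : Type*) [Fintype ι] : Submodule ℤ (ι → ℚ) :=
  LinearMap.range ((Int.castAddHom ℚ).toIntLinearMap.compLeft ι) ⊓
    LinearMap.ker (∑ i, LinearMap.proj i : (ι → ℚ) →ₗ[ℤ] ℚ)

theorem mem_rootLatticeA {x : ι → ℚ} :
    x ∈ rootLatticeA ι ↔ (∀ i, ∃ m : ℤ, x i = m) ∧ ∑ i, x i = 0 := by
  have hint : (∃ u : ι → ℤ, (fun i => (u i : ℚ)) = x) ↔ ∀ i, ∃ m : ℤ, x i = m := by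
    simp only [funext_iff, eq_comm, Classical.skolem]
  simp [rootLatticeA, ← hint, LinearMap.compLeft, Function.comp_def]

theorem A9_eq_rootLatticeA : A9 = rootLatticeA (Fin 10) :=
  Submodule.ext fun _ => mem_rootLatticeA.symm

theorem A7_eq_rootLatticeA : A7 = rootLatticeA (Fin 8) :=
  Submodule.ext fun _ => mem_rootLatticeA.symm

/-- The simple root `eᵢ₊₁ - eᵢ₊₂` of the root lattice `Aₙ ⊂ ℚⁿ⁺¹` (the index `i` starts at `0`). -/
def simpleRoot (i : Fin n) : Fin (n + 1) → ℚ :=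
  Pi.single i.castSucc 1 - Pi.single i.succ 1

theorem dotProduct_simpleRoot (x : Fin (n + 1) → ℚ) (i : Fin n) :
    x ⬝ᵥ simpleRoot i = x i.castSucc - x i.succ := by
  simp [simpleRoot, dotProduct_sub]

theorem simpleRoot_dotProduct_self (i : Fin n) : simpleRoot i ⬝ᵥ simpleRoot i = 2 := by
  have hne : i.castSucc ≠ i.succ := Fin.castSucc_lt_succ.ne
  rw [dotProduct_simpleRoot]
  simp only [simpleRoot, Pi.sub_apply, Pi.single_eq_same, Pi.single_eq_of_ne hne,
    Pi.single_eq_of_ne hne.symm]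
  norm_num

theorem simpleRoot_mem_rootLatticeA (i : Fin n) : simpleRoot i ∈ rootLatticeA (Fin (n + 1)) := by
  refine mem_rootLatticeA.2 ⟨fun j => ⟨(Pi.single i.castSucc 1 - Pi.single i.succ 1 :
    Fin (n + 1) → ℤ) j, ?_⟩, by simp [simpleRoot]⟩
  simp [simpleRoot, Pi.single_apply]

theorem forall_dotProduct_span_simpleRoot_eq_zero_iff {x : Fin (n + 1) → ℚ} :
    (∀ t ∈ Submodule.span ℤ (Set.range (simpleRoot (n := n))), x ⬝ᵥ t = 0) ↔ ∀ i, x i = x 0 := by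
  constructor
  · intro h i
    induction i using Fin.induction with
    | zero => rfl
    | succ i ih =>
      have hi := h _ (Submodule.subset_span ⟨i, rfl⟩)
      rw [dotProduct_simpleRoot, sub_eq_zero] at hi
      rw [← hi, ih]
  · intro hx t ht
    induction ht using Submodule.span_induction with
    | mem t ht =>
      obtain ⟨i, rfl⟩ := ht
      rw [dotProduct_simpleRoot, hx, hx i.succ, sub_self]
    | zero => exact dotProduct_zero x
    | add t t' _ _ ht ht' => rw [dotProduct_add, ht, ht', add_zero]
    | smul c t _ ht => rw [dotProduct_smul, ht, smul_zero]

theorem single_sub_single_last_mem_span_simpleRoot {k : ℕ} (i : Fin (n + 1)) (hi : k ≤ i) :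
    (Pi.single i 1 - Pi.single (Fin.last n) 1 : Fin (n + 1) → ℚ) ∈
      Submodule.span ℤ (simpleRoot '' {j : Fin n | k ≤ j}) := by
  induction i using Fin.reverseInduction with
  | last => simp
  | cast i ih =>
    rw [← sub_add_sub_cancel _ (Pi.single i.succ 1)]
    exact add_mem (Submodule.subset_span ⟨i, hi, rfl⟩) (ih (hi.trans (Nat.le_succ _)))

theorem mem_span_simpleRoot_iff {k : ℕ} {x : Fin (n + 1) → ℚ} :
    x ∈ Submodule.span ℤ (simpleRoot '' {j : Fin n | k ≤ j}) ↔
      x ∈ rootLatticeA (Fin (n + 1)) ∧ ∀ i : Fin (n + 1), (i : ℕ) < k → x i = 0 := by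
  constructor
  · intro h
    induction h using Submodule.span_induction with
    | mem x hx =>
      obtain ⟨j, hj, rfl⟩ := hx
      rw [Set.mem_ofPred_eq] at hj
      refine ⟨simpleRoot_mem_rootLatticeA j, fun i hi => ?_⟩
      have hne : i ≠ j.castSucc ∧ i ≠ j.succ := by
        simp only [ne_eq, Fin.ext_iff, Fin.val_castSucc, Fin.val_succ]
        omega
      simp [simpleRoot, hne]
    | zero => exact ⟨zero_mem _, fun _ _ => rfl⟩
    | add x y _ _ hx hy =>
      exact ⟨add_mem hx.1 hy.1, fun i hi => by simp [hx.2 i hi, hy.2 i hi]⟩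
    | smul c x _ hx => exact ⟨Submodule.smul_mem _ c hx.1, fun i hi => by simp [hx.2 i hi]⟩
  · rintro ⟨hx, hzero⟩
    obtain ⟨hint, hsum⟩ := mem_rootLatticeA.1 hx
    choose m hm using hint
    have hx_eq : x = ∑ i, m i • (Pi.single i 1 - Pi.single (Fin.last n) 1) := by
      simp only [← Int.cast_smul_eq_zsmul ℚ, ← hm, smul_sub, Finset.sum_sub_distrib,
        ← Finset.sum_smul, hsum, zero_smul, sub_zero]
      exact pi_eq_sum_univ' x
    rw [hx_eq]
    refine Submodule.sum_mem _ fun i _ => ?_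
    by_cases hi : (i : ℕ) < k
    · have hmi : m i = 0 := by exact_mod_cast (hm i).symm.trans (hzero i hi)
      simp [hmi]
    · exact Submodule.smul_mem _ _ (single_sub_single_last_mem_span_simpleRoot i (not_lt.1 hi))

theorem span_range_simpleRoot :
    Submodule.span ℤ (Set.range (simpleRoot (n := n))) = rootLatticeA (Fin (n + 1)) := by
  ext x
  simpa using mem_span_simpleRoot_iff (k := 0) (x := x)

theorem tail_dotProduct_tail {x : Fin (n + 1) → ℚ} (hx : x 0 = 0) (y : Fin (n + 1) → ℚ) :
    Fin.tail x ⬝ᵥ Fin.tail y = x ⬝ᵥ y := by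
  simp [dotProduct, Fin.sum_univ_succ, hx, Fin.tail]

theorem tail_mem_rootLatticeA_iff {x : Fin (n + 1) → ℚ} (hx : x 0 = 0) :
    Fin.tail x ∈ rootLatticeA (Fin n) ↔ x ∈ rootLatticeA (Fin (n + 1)) := by
  have hzero : ∃ m : ℤ, x 0 = m := ⟨0, by simpa using hx⟩
  simp only [mem_rootLatticeA, Fin.forall_fin_succ, Fin.sum_univ_succ, hx, zero_add, Fin.tail]
  simp [← hx, hzero]

/-- The coset `s α + Aₘ₋₁` of the root lattice in its dual, for `m` the number of elements of `ι`
and `α` the glue generator `eⱼ - (1/m) ∑ᵢ eᵢ` (any `j`): the vectors of sum zero whose coordinates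
are all congruent to `-s/m` modulo `1`. -/
def glueCoset (ι : Type*) [Fintype ι] (s : ℤ) : Set (ι → ℚ) :=
  {x | (∀ i, ∃ m : ℤ, x i + s / Fintype.card ι = m) ∧ ∑ i, x i = 0}

theorem mem_glueCoset_zero {x : ι → ℚ} : x ∈ glueCoset ι 0 ↔ x ∈ rootLatticeA ι := by
  simp [glueCoset, mem_rootLatticeA]

theorem add_mem_glueCoset {x y : ι → ℚ} (hx : x ∈ glueCoset ι s) (hy : y ∈ glueCoset ι t) :
    x + y ∈ glueCoset ι (s + t) := by
  refine ⟨fun i => ?_, by simp [Finset.sum_add_distrib, hx.2, hy.2]⟩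
  obtain ⟨m, hm⟩ := hx.1 i
  obtain ⟨l, hl⟩ := hy.1 i
  exact ⟨m + l, by push_cast [← hm, ← hl, Pi.add_apply]; ring⟩

theorem zsmul_mem_glueCoset {x : ι → ℚ} (hx : x ∈ glueCoset ι s) (t : ℤ) :
    t • x ∈ glueCoset ι (t * s) := by
  refine ⟨fun i => ?_, by simp [← Finset.mul_sum, hx.2]⟩
  obtain ⟨m, hm⟩ := hx.1 i
  exact ⟨t * m, by push_cast [← hm, Pi.smul_apply, zsmul_eq_mul]; ring⟩

theorem glueCoset_congr [Nonempty ι] (h : s ≡ t [ZMOD Fintype.card ι]) :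
    glueCoset ι s = glueCoset ι t := by
  obtain ⟨d, hd⟩ := h.dvd
  obtain rfl : t = s + Fintype.card ι * d := by omega
  have hshift (q : ℚ) : q + (s + Fintype.card ι * d : ℤ) / Fintype.card ι =
      q + s / Fintype.card ι + d := by
    field_simp
    push_cast
    ring
  ext x
  refine and_congr_left fun _ => forall_congr' fun i => ?_
  rw [hshift]
  exact ⟨fun ⟨m, hm⟩ => ⟨m + d, by rw [hm, Int.cast_add]⟩,
    fun ⟨m, hm⟩ => ⟨m - d, by rw [Int.cast_sub, ← hm, add_sub_cancel_right]⟩⟩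

theorem card_dvd_of_apply_eq_intCast {x : ι → ℚ} (hx : x ∈ glueCoset ι s) {i : ι}
    {m : ℤ} (hm : x i = m) : (Fintype.card ι : ℤ) ∣ s := by
  have : Nonempty ι := ⟨i⟩
  obtain ⟨l, hl⟩ := hx.1 i
  refine ⟨l - m, ?_⟩
  rw [hm] at hl
  have hs : (s : ℚ) = Fintype.card ι * (l - m) := by
    rw [← hl]
    field_simp
    ring
  exact_mod_cast hs

theorem mem_glueCoset_iff_sub_zsmul_mem {x g : ι → ℚ} (hg : g ∈ glueCoset ι 1) :
    x ∈ glueCoset ι s ↔ x - s • g ∈ rootLatticeA ι := by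
  rw [← mem_glueCoset_zero]
  constructor
  · intro hx
    simpa [sub_eq_add_neg] using add_mem_glueCoset hx (zsmul_mem_glueCoset hg (-s))
  · intro hx
    simpa using add_mem_glueCoset hx (zsmul_mem_glueCoset hg s)

theorem zero_le_dotProduct_self {R : Type*} [Ring R] [LinearOrder R] [IsOrderedRing R]
    (x : ι → R) : 0 ≤ x ⬝ᵥ x :=
  Finset.sum_nonneg fun _ _ => mul_self_nonneg _

theorem intCast_mul_sub_one_nonneg (m : ℤ) : (0 : ℚ) ≤ m * (m - 1) := by
  rw [mul_sub_one, sub_nonneg, ← sq]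
  exact_mod_cast Int.le_self_sq m

theorem dotProduct_self_eq_of_sum_eq_zero [Nonempty ι] {x : ι → ℚ} (hx : ∑ i, x i = 0) (s : ℚ) :
    x ⬝ᵥ x = s * (Fintype.card ι - s) / Fintype.card ι +
      ∑ i, (x i + s / Fintype.card ι) * (x i + s / Fintype.card ι - 1) := by
  have hterm (i : ι) : (x i + s / Fintype.card ι) * (x i + s / Fintype.card ι - 1) =
      x i * x i + (2 * (s / Fintype.card ι) - 1) * x i +
        s / Fintype.card ι * (s / Fintype.card ι - 1) := by ring
  simp_rw [hterm, Finset.sum_add_distrib, ← Finset.mul_sum, hx, dotProduct, Finset.sum_const,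
    Finset.card_univ, nsmul_eq_mul]
  field_simp
  ring

theorem le_dotProduct_self_of_mem_glueCoset [Nonempty ι] {x : ι → ℚ} (hx : x ∈ glueCoset ι s) :
    (s * (Fintype.card ι - s) / Fintype.card ι : ℚ) ≤ x ⬝ᵥ x := by
  rw [dotProduct_self_eq_of_sum_eq_zero hx.2 s]
  refine le_add_of_nonneg_right (Finset.sum_nonneg fun i _ => ?_)
  obtain ⟨m, hm⟩ := hx.1 i
  exact hm ▸ intCast_mul_sub_one_nonneg m

theorem four_le_dotProduct_self {x : ι → ℚ} (hx : x ∈ rootLatticeA ι) {i j : ι} (hij : i ≠ j)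
    (h_eq : x i = x j) (h_ne : x i ≠ 0) : 4 ≤ x ⬝ᵥ x := by
  wlog hneg : x i < 0 generalizing x
  · simpa using this (neg_mem hx) (by simpa using h_eq) (by simpa using h_ne)
      (by simpa using lt_of_le_of_ne (not_lt.1 hneg) h_ne.symm)
  obtain ⟨hint, hsum⟩ := mem_rootLatticeA.1 hx
  have := Nonempty.intro i
  have hnonneg (l : ι) : 0 ≤ x l * (x l - 1) := by
    obtain ⟨m, hm⟩ := hint l
    exact hm ▸ intCast_mul_sub_one_nonneg m
  have htwo : 2 ≤ x i * (x i - 1) := by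
    obtain ⟨m, hm⟩ := hint i
    have hm_le : m ≤ -1 := by
      rw [hm] at hneg
      exact Int.le_sub_one_of_lt (by exact_mod_cast hneg)
    rw [hm]
    exact_mod_cast (by nlinarith : 2 ≤ m * (m - 1))
  calc (4 : ℚ) ≤ x i * (x i - 1) + x j * (x j - 1) := by rw [← h_eq]; linarith
    _ ≤ ∑ l, x l * (x l - 1) :=
      Finset.add_le_sum (fun l _ => hnonneg l) (Finset.mem_univ i) (Finset.mem_univ j) hij
    _ = x ⬝ᵥ x := by simpa using (dotProduct_self_eq_of_sum_eq_zero hsum 0).symm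

end RootLatticeA

section NiemeierLattice

variable {s t : ℤ} {w w' : V26}

theorem a_eq_simpleRoot : a = simpleRoot := by
  funext i j
  simp only [a, simpleRoot, Pi.sub_apply, Pi.single_apply, Fin.ext_iff, Fin.val_castSucc,
    Fin.val_succ]
  split_ifs <;> first | omega | simp

theorem i1A5_eq_span_simpleRoot :
    i1A5 = Submodule.span ℤ (Set.range (simpleRoot (n := 5))) := by
  have hroots : ({d1, d2, d3, d4, d5} : Set V6) = Set.range (simpleRoot (n := 5)) := by
    have hd (i : Fin 5) : ![d1, d2, d3, d4, d5] i = simpleRoot i := by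
      funext j
      fin_cases i <;> fin_cases j <;> simp [d1, d2, d3, d4, d5, simpleRoot]
    rw [← funext hd]
    simp only [Matrix.range_cons, Matrix.range_empty, Set.union_empty, Set.singleton_union]
  rw [i1A5, hroots]

theorem mem_orth26_Tset2 :
    w ∈ orth26 Tset2 ↔ w.1 0 = w.1 1 ∧ ∃ c, w.2.2 = fun _ => c := by
  have ha : w.1 ⬝ᵥ a 0 = 0 ↔ w.1 0 = w.1 1 := by
    rw [a_eq_simpleRoot, dotProduct_simpleRoot, sub_eq_zero]
    rfl
  have hconst : (∃ c, w.2.2 = fun _ => c) ↔ ∀ t ∈ i1A5, w.2.2 ⬝ᵥ t = 0 := by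
    rw [i1A5_eq_span_simpleRoot, forall_dotProduct_span_simpleRoot_eq_zero_iff]
    exact ⟨fun ⟨c, hc⟩ i => by rw [hc], fun h => ⟨_, funext h⟩⟩
  rw [← ha, hconst]
  constructor
  · intro h
    have h₁ : w.1 ⬝ᵥ a 0 + w.2.1 ⬝ᵥ 0 + w.2.2 ⬝ᵥ 0 = 0 :=
      h (a 0, 0, 0) ⟨⟨1, (one_smul _ _).symm⟩, rfl, zero_mem _⟩
    refine ⟨by simpa using h₁, fun t ht => ?_⟩
    have h₂ : w.1 ⬝ᵥ 0 + w.2.1 ⬝ᵥ 0 + w.2.2 ⬝ᵥ t = 0 :=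
      h (0, 0, t) ⟨⟨0, (zero_smul _ _).symm⟩, rfl, ht⟩
    simpa using h₂
  · rintro ⟨h₁, h₂⟩ ⟨_, _, t⟩ ⟨⟨c, rfl⟩, rfl, ht⟩
    change w.1 ⬝ᵥ (c • a 0) + w.2.1 ⬝ᵥ 0 + w.2.2 ⬝ᵥ t = 0
    rw [dotProduct_smul, h₁, dotProduct_zero, h₂ t ht, smul_zero, add_zero, add_zero]

theorem alphaA9_mem_glueCoset : alphaA9 ∈ glueCoset (Fin 10) 1 := by
  have halpha : alphaA9 = fun i => (if i = 0 then 1 else 0) - 1 / 10 := by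
    funext i
    fin_cases i <;> simp [alphaA9, a, Fin.sum_univ_succ] <;> norm_num
  refine ⟨fun i => ⟨if i = 0 then 1 else 0, ?_⟩, ?_⟩
  · simp [halpha]
  · simp [halpha, Finset.sum_sub_distrib]

theorem delta6_eq : delta6 = fun _ => 1 / 2 := by
  funext i
  fin_cases i <;> simp [delta6, d1, d2, d3, d4, d5, d6] <;> norm_num

theorem deltaTilde6_eq : deltaTilde6 = fun i => if i = 5 then -1 / 2 else 1 / 2 := by
  funext i
  fin_cases i <;> simp [deltaTilde6, d1, d2, d3, d4, d5, d6] <;> norm_num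

theorem const_sub_glue_mem_D6_iff {c : ℚ} {q r : ℤ} :
    (fun _ => c) - (q • delta6 + r • deltaTilde6) ∈ D6 ↔ Even r ∧ ∃ k : ℤ, c = q / 2 + k := by
  have hcoord (i : Fin 6) : ((fun _ => c) - (q • delta6 + r • deltaTilde6) : V6) i =
      c - (q + r) / 2 + if i = 5 then (r : ℚ) else 0 := by
    simp only [delta6_eq, deltaTilde6_eq, Pi.sub_apply, Pi.add_apply, Pi.smul_apply]
    split_ifs <;> simp only [zsmul_eq_mul] <;> ring
  have hmem : (fun _ => c) - (q • delta6 + r • deltaTilde6) ∈ D6 ↔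
      (∀ i : Fin 6, ∃ m : ℤ, (c - (q + r) / 2 + if i = 5 then (r : ℚ) else 0) = m) ∧
        ∃ l : ℤ, 6 * (c - (q + r) / 2) + r = 2 * l := by
    have hsum : ∑ i : Fin 6, (c - (q + r) / 2 + if i = 5 then (r : ℚ) else 0) =
        6 * (c - (q + r) / 2) + r := by
      rw [Finset.sum_add_distrib, Fin.sum_const, Finset.sum_ite_eq' _ _ fun _ => (r : ℚ),
        if_pos (Finset.mem_univ _), nsmul_eq_mul, Nat.cast_ofNat]
    rw [← hsum]
    simp only [← hcoord]
    rfl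
  rw [hmem]
  constructor
  · rintro ⟨hint, l, hl⟩
    obtain ⟨m, hm⟩ : ∃ m : ℤ, c - (q + r) / 2 = m := by simpa using hint 0
    rw [hm] at hl
    have hr : r = 2 * (l - 3 * m) := by
      have : 6 * m + r = 2 * l := by exact_mod_cast hl
      omega
    refine ⟨hr ▸ even_two_mul _, m + l - 3 * m, ?_⟩
    rw [eq_add_of_sub_eq hm, hr]
    push_cast
    ring
  · rintro ⟨⟨j, rfl⟩, k, rfl⟩
    refine ⟨fun i => ⟨k - j + if i = 5 then j + j else 0, ?_⟩, 3 * k - 2 * j, ?_⟩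
    · push_cast
      ring
    · push_cast
      ring

theorem mem_NL2 : w ∈ NL2 ↔ ∃ p q r : ℤ, w.1 ∈ glueCoset (Fin 10) (2 * p + 5 * q) ∧
    w.2.1 ∈ glueCoset (Fin 10) (4 * p + 5 * r) ∧
      w.2.2 - (q • delta6 + r • deltaTilde6) ∈ D6 := by
  have hroot : {p : V26 | p.1 ∈ A9 ∧ p.2.1 ∈ A9 ∧ p.2.2 ∈ D6} = A9.prod (A9.prod D6) := by
    ext
    simp
  have hsup : w ∈ NL2 ↔ ∃ p q r : ℤ, w - (p • ((2 : ℚ) • alphaA9, (4 : ℚ) • alphaA9, (0 : V6)) +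
      q • ((5 : ℚ) • alphaA9, (0 : V10), delta6) +
        r • ((0 : V10), (5 : ℚ) • alphaA9, deltaTilde6)) ∈ A9.prod (A9.prod D6) := by
    rw [NL2, hroot, Submodule.span_union, Submodule.span_eq, Submodule.mem_sup]
    constructor
    · rintro ⟨e, he, g, hg, rfl⟩
      obtain ⟨p, q, r, rfl⟩ := Submodule.mem_span_triple.1 hg
      exact ⟨p, q, r, by rwa [add_sub_cancel_right]⟩
    · rintro ⟨p, q, r, h⟩
      exact ⟨_, h, _, Submodule.mem_span_triple.2 ⟨p, q, r, rfl⟩, sub_add_cancel _ _⟩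
  simp_rw [hsup, mem_glueCoset_iff_sub_zsmul_mem alphaA9_mem_glueCoset, ← A9_eq_rootLatticeA]
  refine exists₃_congr fun p q r => ?_
  rw [Submodule.mem_prod, Submodule.mem_prod]
  congr! 3
  · simp only [Prod.fst_sub, Prod.fst_add, Prod.smul_fst, smul_zero, add_zero]
    module
  · simp only [Prod.fst_sub, Prod.fst_add, Prod.snd_sub, Prod.snd_add, Prod.smul_fst, Prod.smul_snd,
      smul_zero, add_zero]
    module
  · simp

/-- The vectors of `W` of glue class `s`. The elements of the glue code of `N(A₉²D₆)` compatible
with orthogonality to `T` are the multiples of `(α, 2α, δ₆)`, so the class is recorded by a single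
integer, modulo `10`. -/
def cosetW2 (s : ℤ) : Set V26 :=
  {w | w.1 ∈ glueCoset (Fin 10) s ∧ w.1 0 = w.1 1 ∧ w.2.1 ∈ glueCoset (Fin 10) (2 * s) ∧
    ∃ k : ℤ, w.2.2 = fun _ => (s / 2 + k : ℚ)}

theorem mem_W2 : w ∈ W2 ↔ ∃ s, w ∈ cosetW2 s := by
  rw [W2, Submodule.mem_inf, mem_orth26_Tset2, mem_NL2]
  constructor
  · rintro ⟨⟨p, q, r, hx, hy, hz⟩, h01, c, hc⟩
    rw [hc, const_sub_glue_mem_D6_iff] at hz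
    obtain ⟨⟨j, rfl⟩, k, rfl⟩ := hz
    have hclass : 4 * p + 5 * (j + j) ≡ 2 * (2 * p + 5 * q) [ZMOD Fintype.card (Fin 10)] :=
      Int.modEq_iff_dvd.2 ⟨q - j, by rw [Fintype.card_fin]; push_cast; ring⟩
    refine ⟨2 * p + 5 * q, hx, h01, glueCoset_congr hclass ▸ hy, k - p - 2 * q, ?_⟩
    rw [hc]
    push_cast
    ring_nf
  · rintro ⟨s, hx, h01, hy, k, hk⟩
    have hclass : 2 * s ≡ 4 * (-2 * s) + 5 * 0 [ZMOD Fintype.card (Fin 10)] :=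
      Int.modEq_iff_dvd.2 ⟨-s, by rw [Fintype.card_fin]; push_cast; ring⟩
    refine ⟨⟨-2 * s, s, 0, by ring_nf; exact hx, glueCoset_congr hclass ▸ hy, ?_⟩, h01, _, hk⟩
    rw [hk, const_sub_glue_mem_D6_iff]
    exact ⟨Even.zero, k, rfl⟩

theorem mem_N2 : w ∈ N2 ↔ w ∈ cosetW2 0 := by
  have hz (c : ℚ) : (fun _ => c) ∈ D6 ↔ ∃ k : ℤ, c = k := by
    simpa using const_sub_glue_mem_D6_iff (c := c) (q := 0) (r := 0)
  simp only [N2, Submodule.mem_inf, Submodule.mem_prod, mem_orth26_Tset2, cosetW2,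
    Set.mem_ofPred_eq, mul_zero, mem_glueCoset_zero, ← A9_eq_rootLatticeA, Int.cast_zero, zero_div,
    zero_add]
  constructor
  · rintro ⟨⟨hx, hy, hD⟩, h01, c, hc⟩
    obtain ⟨k, rfl⟩ := (hz c).1 (hc ▸ hD)
    exact ⟨hx, h01, hy, k, hc⟩
  · rintro ⟨hx, h01, hy, k, hk⟩
    exact ⟨⟨hx, hy, hk ▸ (hz k).2 ⟨k, rfl⟩⟩, h01, _, hk⟩

theorem add_mem_cosetW2 (hw : w ∈ cosetW2 s) (hw' : w' ∈ cosetW2 t) :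
    w + w' ∈ cosetW2 (s + t) := by
  obtain ⟨hx, h01, hy, k, hk⟩ := hw
  obtain ⟨hx', h01', hy', k', hk'⟩ := hw'
  refine ⟨add_mem_glueCoset hx hx', by simp [h01, h01'],
    mul_add 2 s t ▸ add_mem_glueCoset hy hy', k + k', ?_⟩
  funext i
  simp only [Prod.snd_add, hk, hk', Pi.add_apply]
  push_cast
  ring

theorem zsmul_mem_cosetW2 (hw : w ∈ cosetW2 s) (t : ℤ) : t • w ∈ cosetW2 (t * s) := by
  obtain ⟨hx, h01, hy, k, hk⟩ := hw
  refine ⟨zsmul_mem_glueCoset hx t, by simp [h01],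
    mul_left_comm t 2 s ▸ zsmul_mem_glueCoset hy t, t * k, ?_⟩
  funext i
  simp only [Prod.smul_snd, hk, Pi.smul_apply]
  push_cast [zsmul_eq_mul]
  ring

theorem cosetW2_congr (h : s ≡ t [ZMOD 10]) : cosetW2 s = cosetW2 t := by
  obtain ⟨d, hd⟩ := h.dvd
  obtain rfl : t = s + 10 * d := by omega
  have h2 : 2 * s ≡ 2 * (s + 10 * d) [ZMOD 10] := h.mul_left 2
  have hhalf (k : ℤ) : ((s + 10 * d : ℤ) / 2 + k : ℚ) = s / 2 + (k + 5 * d : ℤ) := by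
    push_cast
    ring
  ext w
  simp only [cosetW2, glueCoset_congr (ι := Fin 10) h, glueCoset_congr (ι := Fin 10) h2, hhalf]
  refine and_congr_right' (and_congr_right' (and_congr_right' ?_))
  exact (Equiv.addRight (5 * d)).surjective.exists

theorem ten_dvd_of_apply_eq_intCast (hw : w ∈ cosetW2 s) {m : ℤ} (hm : w.1 0 = m) : 10 ∣ s :=
  card_dvd_of_apply_eq_intCast hw.1 hm

theorem mem_N2_iff_ten_dvd (hw : w ∈ cosetW2 s) : w ∈ N2 ↔ 10 ∣ s := by
  constructor
  · rintro ⟨⟨⟨hint, -⟩, -⟩, -⟩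
    obtain ⟨m, hm⟩ := hint 0
    exact ten_dvd_of_apply_eq_intCast hw hm
  · intro h
    rwa [mem_N2, ← cosetW2_congr (Int.modEq_zero_iff_dvd.2 h)]

theorem cosetW2_one_nonempty : (cosetW2 1).Nonempty := by
  refine ⟨(fun i => (if i = 2 then 1 else 0) - 1 / 10,
    fun i => (if i = 0 then 2 else 0) - 2 / 10, fun _ => 1 / 2), ?_, by simp, ?_, 0, by simp⟩
  · exact ⟨fun i => ⟨if i = 2 then 1 else 0, by simp⟩, by simp⟩
  · exact ⟨fun i => ⟨if i = 0 then 2 else 0, by simp⟩, by norm_num⟩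

theorem nonempty_W2_quotient_N2_addEquiv :
    Nonempty ((↥W2 ⧸ N2.comap W2.subtype) ≃+ ZMod 10) := by
  obtain ⟨g, hg⟩ := cosetW2_one_nonempty
  have hsmul (m : ℤ) : m • g ∈ cosetW2 m := by simpa using zsmul_mem_cosetW2 hg m
  let gW : ↥W2 := ⟨g, mem_W2.2 ⟨1, hg⟩⟩
  refine nonempty_addEquiv_zmod_of_generator (g := Submodule.Quotient.mk gW) ?_ fun m => ?_
  · rintro ⟨w, hw⟩
    obtain ⟨s, hs⟩ := mem_W2.1 hw
    refine ⟨s, (Submodule.Quotient.eq _).2 (mem_N2.2 ?_)⟩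
    simpa [sub_eq_add_neg] using add_mem_cosetW2 (hsmul s) (zsmul_mem_cosetW2 hs (-1))
  · rw [← Submodule.Quotient.mk_smul, Submodule.Quotient.mk_eq_zero]
    exact mem_N2_iff_ten_dvd (hsmul m)

theorem bil26_eq_dotProduct (w w' : V26) :
    bil26 w w' = w.1 ⬝ᵥ w'.1 + w.2.1 ⬝ᵥ w'.2.1 + w.2.2 ⬝ᵥ w'.2.2 := rfl

theorem three_halves_le_dotProduct_self_of_odd (hs : Odd s) {k : ℤ} {z : V6}
    (hz : z = fun _ => (s / 2 + k : ℚ)) : 3 / 2 ≤ z ⬝ᵥ z := by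
  obtain ⟨c, rfl⟩ := hs
  have hnonneg := intCast_mul_sub_one_nonneg (c + k + 1)
  have heq : z ⬝ᵥ z = 6 * ((c + k + 1 : ℤ) * ((c + k + 1 : ℤ) - 1)) + 3 / 2 := by
    simp only [hz, dotProduct, Finset.sum_const, Finset.card_univ, Fintype.card_fin, nsmul_eq_mul]
    push_cast
    ring
  linarith

theorem two_lt_bil26_self (hs : 0 < s) (hs' : s < 10) (hw : w ∈ cosetW2 s) : 2 < bil26 w w := by
  obtain ⟨hx, -, hy, k, hz⟩ := hw
  rw [bil26_eq_dotProduct]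
  have hX := le_dotProduct_self_of_mem_glueCoset hx
  have hY₀ := zero_le_dotProduct_self w.2.1
  have hZ₀ := zero_le_dotProduct_self w.2.2
  simp only [Fintype.card_fin, Nat.cast_ofNat] at hX
  rcases Int.even_or_odd s with ⟨j, rfl⟩ | h_odd
  · have hY := le_dotProduct_self_of_mem_glueCoset hy
    have hclass : 2 * (j + j) ≡ 2 * (j + j) - 10 [ZMOD Fintype.card (Fin 10)] :=
      Int.modEq_iff_dvd.2 ⟨-1, by simp⟩
    have hY' := le_dotProduct_self_of_mem_glueCoset (glueCoset_congr hclass ▸ hy)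
    simp only [Fintype.card_fin, Nat.cast_ofNat] at hY hY'
    push_cast at hY hY'
    have hj : 1 ≤ j ∧ j ≤ 4 := by omega
    obtain ⟨hj₁, hj₄⟩ := hj
    interval_cases j <;> norm_num at hX hY hY' <;> linarith
  · have hZ := three_halves_le_dotProduct_self_of_odd h_odd hz
    have hs₁ : (1 : ℚ) ≤ s := by exact_mod_cast hs
    have hs₉ : (s : ℚ) ≤ 9 := by exact_mod_cast Int.le_sub_one_of_lt hs'
    have hX' : (9 / 10 : ℚ) ≤ s * (10 - s) / 10 := by nlinarith
    linarith

theorem mem_cosetW2_zero_of_bil26_self_eq_two (hw : w ∈ W2) (h2 : bil26 w w = 2) :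
    w ∈ cosetW2 0 := by
  obtain ⟨s, hs⟩ := mem_W2.1 hw
  rw [← cosetW2_congr (Int.mod_modEq s 10)] at hs
  rcases (Int.emod_nonneg s (by norm_num : (10 : ℤ) ≠ 0)).eq_or_lt with h0 | hpos
  · rwa [h0]
  · exact absurd h2 (two_lt_bil26_self hpos (Int.emod_lt_of_pos s (by norm_num)) hs).ne'

theorem apply_zero_eq_zero_of_bil26_self_eq_two (hw : w ∈ W2) (h2 : bil26 w w = 2) :
    w.1 0 = 0 ∧ w.2.2 = 0 := by
  obtain ⟨hx, h01, -, k, hk⟩ := mem_cosetW2_zero_of_bil26_self_eq_two hw h2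
  have hX₀ := zero_le_dotProduct_self w.1
  have hY₀ := zero_le_dotProduct_self w.2.1
  have hZ₀ := zero_le_dotProduct_self w.2.2
  rw [bil26_eq_dotProduct] at h2
  constructor
  · by_contra hne
    linarith [four_le_dotProduct_self (mem_glueCoset_zero.1 hx) Fin.zero_ne_one h01 hne]
  · have hk₀ : k = 0 := by
      have hZ : w.2.2 ⬝ᵥ w.2.2 = 6 * (k : ℚ) ^ 2 := by simp [hk, dotProduct, sq]
      have hsq : k ^ 2 < 1 := by
        have : (k : ℚ) ^ 2 < 1 := by linarith
        exact_mod_cast this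
      simpa using hsq
    rw [hk, hk₀]
    funext
    simp

theorem span_a_eq : Submodule.span ℤ ({a 2, a 3, a 4, a 5, a 6, a 7, a 8} : Set V10) =
    Submodule.span ℤ (simpleRoot '' {j : Fin 9 | 2 ≤ (j : ℕ)}) := by
  have himage : ({2, 3, 4, 5, 6, 7, 8} : Set (Fin 9)) = {j : Fin 9 | 2 ≤ (j : ℕ)} := by
    ext j
    fin_cases j <;> simp
  simp only [← himage, Set.image_insert_eq, Set.image_singleton, a_eq_simpleRoot]

theorem mem_span_a {x : V10} :
    x ∈ Submodule.span ℤ ({a 2, a 3, a 4, a 5, a 6, a 7, a 8} : Set V10) ↔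
      x ∈ rootLatticeA (Fin 10) ∧ x 0 = 0 ∧ x 1 = 0 := by
  rw [span_a_eq, mem_span_simpleRoot_iff]
  simp [Fin.forall_fin_succ]

theorem mem_span_a_prod_A9_prod_bot :
    w ∈ (Submodule.span ℤ ({a 2, a 3, a 4, a 5, a 6, a 7, a 8} : Set V10)).prod
      (A9.prod (⊥ : Submodule ℤ V6)) ↔ w ∈ W2 ∧ w.1 0 = 0 ∧ w.2.2 = 0 := by
  simp only [Submodule.mem_prod, mem_span_a, A9_eq_rootLatticeA, Submodule.mem_bot]
  constructor
  · rintro ⟨⟨hx, h0, h1⟩, hy, hz⟩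
    exact ⟨mem_W2.2 ⟨0, mem_glueCoset_zero.2 hx, h0.trans h1.symm, mem_glueCoset_zero.2 hy, 0,
      by rw [hz]; funext; simp⟩, h0, hz⟩
  · rintro ⟨hw, h0, hz⟩
    obtain ⟨s, hs⟩ := mem_W2.1 hw
    have hdvd := ten_dvd_of_apply_eq_intCast hs (m := 0) (by simpa using h0)
    obtain ⟨hx, h01, hy, -⟩ := mem_N2.1 ((mem_N2_iff_ten_dvd hs).2 hdvd)
    exact ⟨⟨mem_glueCoset_zero.1 hx, h0, h01 ▸ h0⟩, mem_glueCoset_zero.1 hy, hz⟩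

theorem R2_eq_prod : R2 = (Submodule.span ℤ ({a 2, a 3, a 4, a 5, a 6, a 7, a 8} : Set V10)).prod
    (A9.prod (⊥ : Submodule ℤ V6)) := by
  apply le_antisymm
  · refine Submodule.span_le.2 fun w ⟨hw, h2⟩ => mem_span_a_prod_A9_prod_bot.2 ⟨hw, ?_⟩
    exact apply_zero_eq_zero_of_bil26_self_eq_two hw h2
  · have hroot {w : V26} (hw : w ∈ (Submodule.span ℤ
        ({a 2, a 3, a 4, a 5, a 6, a 7, a 8} : Set V10)).prod (A9.prod (⊥ : Submodule ℤ V6)))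
        (h2 : bil26 w w = 2) : w ∈ R2 :=
      Submodule.subset_span ⟨(mem_span_a_prod_A9_prod_bot.1 hw).1, h2⟩
    refine (Submodule.prod_le_iff ..).2 ⟨?_, Submodule.map_le_iff_le_comap.2 <|
      (Submodule.prod_le_iff ..).2 ⟨?_, by simp⟩⟩
    · rw [span_a_eq] at hroot ⊢
      refine (Submodule.map_span_le _ _ _).2 ?_
      rintro _ ⟨j, hj, rfl⟩
      refine hroot ⟨Submodule.subset_span ⟨j, hj, rfl⟩, zero_mem _⟩ ?_
      simp [bil26_eq_dotProduct, simpleRoot_dotProduct_self]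
    · rw [A9_eq_rootLatticeA] at hroot ⊢
      rw [← span_range_simpleRoot]
      refine (Submodule.map_span_le _ _ _).2 ?_
      rintro _ ⟨j, rfl⟩
      refine hroot ⟨zero_mem _, simpleRoot_mem_rootLatticeA j, zero_mem _⟩ ?_
      simp [bil26_eq_dotProduct, simpleRoot_dotProduct_self]

theorem mem_R2_iff_mem_W2 : w ∈ R2 ↔ w ∈ W2 ∧ w.1 0 = 0 ∧ w.2.2 = 0 := by
  rw [R2_eq_prod, mem_span_a_prod_A9_prod_bot]

theorem mem_R2_of_zsmul_mem_R2 (hw : w ∈ W2) {n : ℤ} (hn : n ≠ 0) (h : n • w ∈ R2) : w ∈ R2 := by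
  obtain ⟨-, h0, hz⟩ := mem_R2_iff_mem_W2.1 h
  exact mem_R2_iff_mem_W2.2
    ⟨hw, (smul_eq_zero.1 h0).resolve_left hn, (smul_eq_zero.1 hz).resolve_left hn⟩

theorem mem_R2 : w ∈ R2 ↔
    (w.1 ∈ rootLatticeA (Fin 10) ∧ w.1 0 = 0 ∧ w.1 1 = 0) ∧ w.2.1 ∈ A9 ∧ w.2.2 = 0 := by
  rw [R2_eq_prod, Submodule.mem_prod, Submodule.mem_prod, mem_span_a, Submodule.mem_bot]

/-- The identification of the root lattice of `W` with `A₇ ⊕ A₉`; the summand `A₇` lives on the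
last eight coordinates of the first `ℚ¹⁰`. -/
def R2EquivA7ProdA9 : ↥R2 ≃ₗ[ℤ] (↥A7 × ↥A9) where
  toFun w := (⟨Fin.tail (Fin.tail w.1.1), by
      obtain ⟨⟨hx, h0, h1⟩, -⟩ := mem_R2.1 w.2
      rwa [A7_eq_rootLatticeA, tail_mem_rootLatticeA_iff h1, tail_mem_rootLatticeA_iff h0]⟩,
    ⟨w.1.2.1, (mem_R2.1 w.2).2.1⟩)
  map_add' _ _ := rfl
  map_smul' _ _ := rfl
  invFun p := ⟨(Fin.cons 0 (Fin.cons 0 p.1.1), p.2.1, 0), mem_R2.2 ⟨⟨by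
      rw [← tail_mem_rootLatticeA_iff rfl, ← tail_mem_rootLatticeA_iff rfl, ← A7_eq_rootLatticeA]
      exact p.1.2, rfl, rfl⟩, p.2.2, rfl⟩⟩
  left_inv w := by
    obtain ⟨⟨-, h0, h1⟩, -, hz⟩ := mem_R2.1 w.2
    refine Subtype.ext (Prod.ext (funext ?_) (Prod.ext rfl hz.symm))
    exact Fin.cases h0.symm (Fin.cases h1.symm fun _ => rfl)
  right_inv _ := rfl

theorem bil26_eq_R2EquivA7ProdA9 (u v : ↥R2) :
    bil26 (u : V26) (v : V26) =
      bil8 ((R2EquivA7ProdA9 u).1 : V8) ((R2EquivA7ProdA9 v).1 : V8) +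
        bil10 ((R2EquivA7ProdA9 u).2 : V10) ((R2EquivA7ProdA9 v).2 : V10) := by
  obtain ⟨⟨-, h0, h1⟩, -, hz⟩ := mem_R2.1 u.2
  rw [bil26_eq_dotProduct, hz, zero_dotProduct, add_zero, ← tail_dotProduct_tail h0,
    ← tail_dotProduct_tail h1]
  rfl

end NiemeierLattice

/-- For the embedding of `A₁ ⊕ A₅` in `N(A₉²D₆)` with `A₁ = a₁` in the
first `A₉`-factor and `A₅ = i₁(A₅)` in `D₆`: `W/N` is cyclic of order `10`; the root
sublattice of `W` equals `⟨a₃,…,a₉⟩ × A₉ × {0}`, is isometric to `A₇ ⊕ A₉`, and is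
saturated in `W`. -/
theorem fibration_40_data :
    Nonempty ((↥W2 ⧸ N2.comap W2.subtype) ≃+ ZMod 10) ∧
    R2 = (Submodule.span ℤ ({a 2, a 3, a 4, a 5, a 6, a 7, a 8} : Set V10)).prod
      (A9.prod (⊥ : Submodule ℤ V6)) ∧
    (∃ f : ↥R2 ≃ₗ[ℤ] (↥A7 × ↥A9), ∀ u v : ↥R2,
      bil26 (u : V26) (v : V26) =
        bil8 ((f u).1 : V8) ((f v).1 : V8) + bil10 ((f u).2 : V10) ((f v).2 : V10)) ∧
    (∀ x ∈ W2, ∀ n : ℤ, n ≠ 0 → n • x ∈ R2 → x ∈ R2) := by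
  exact ⟨nonempty_W2_quotient_N2_addEquiv, R2_eq_prod,
    ⟨R2EquivA7ProdA9, bil26_eq_R2EquivA7ProdA9⟩, fun _ hx _ hn h => mem_R2_of_zsmul_mem_R2 hx hn h⟩
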